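/- arXiv:2203.00142 — 3 statements merged into one kernel-verified Lean document; each statement's English description precedes it below -/
import Mathlib

section
/- For the first-order Kuramoto model on the complete graph with n vertices: suppose for some 1 ≤ m < n the initial data satisfy ρ_1(0) = ρ_2(0) = ⋯ = ρ_m(0) > ρ_{m+1}(0) ≥ ⋯ ≥ ρ_n(0). Then for every solution ρ: (i) ρ_1(t) = ρ_2(t) = ⋯ = ρ_m(t) for all t ≥ 0; and (ii) ρ_1(t) − max_{m<j≤n} ρ_j(t) ≥ ρ_1(0) − max_{m<j≤n} ρ_j(0) for all t ≥ 0. -/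
/-- The maximum of `f` over the vertices `j` with `m ≤ j` (well-defined since `m < n`). -/
noncomputable def maxFrom {n : ℕ} (m : ℕ) (hm : m < n) (f : Fin n → ℝ) : ℝ :=
  (Finset.univ.filter (fun j : Fin n => m ≤ (j : ℕ))).sup'
    (by exact ⟨⟨m, hm⟩, by simp⟩) f

/-!
The right-hand side of the equation for `ρ_j` has the form `v (ρ_j, ρ)` with `v` locally Lipschitz
and independent of `j`. Hence, for a fixed solution `ρ`, all coordinates solve one and the same
scalar non-autonomous equation `x' = v (x, ρ t)`, and trajectories of a scalar equation with unique
solutions never cross: the initial order of the coordinates is preserved, and initially equal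
coordinates stay equal. A coordinate `ρ_i` which is maximal at time `0` is therefore maximal for all
later times. If `c ≤ a` and `θ` is nonnegative, then among all `x ≤ a` the interaction
`θ (min x c) * (x - c)` is largest at `x = a`, so every gap `ρ_i - ρ_j` has nonnegative derivative.
-/

open Set

section LocallyLipschitz

variable {X : Type*} [PseudoEMetricSpace X]

lemma locallyLipschitz_mul {A : Type*} [NormedRing A] [NormedAlgebra ℝ A] {f g : X → A}
    (hf : LocallyLipschitz f) (hg : LocallyLipschitz g) :
    LocallyLipschitz fun x => f x * g x :=
  (contDiff_mul (𝕜 := ℝ)).locallyLipschitz.comp (hf.prodMk hg)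

lemma locallyLipschitz_sum {ι E : Type*} [SeminormedAddCommGroup E] {f : ι → X → E}
    (s : Finset ι) (hf : ∀ i ∈ s, LocallyLipschitz (f i)) :
    LocallyLipschitz fun x => ∑ i ∈ s, f i x := by
  rw [← Finset.sum_fn]
  exact Finset.sum_induction f LocallyLipschitz (fun _ _ => LocallyLipschitz.add)
    (LocallyLipschitz.const 0) hf

end LocallyLipschitz

section ScalarComparison

variable {Y : Type*} [PseudoMetricSpace Y] {y : ℝ → Y} {a b : ℝ}

lemma ODE_solution_eqOn_Icc_of_locallyLipschitz {E : Type*} [NormedAddCommGroup E] [NormedSpace ℝ E]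
    {v : E × Y → E} {f g : ℝ → E} (hv : LocallyLipschitz v) (hy : ContinuousOn y (Icc a b))
    (hf : ContinuousOn f (Icc a b))
    (hf' : ∀ t ∈ Ico a b, HasDerivWithinAt f (v (f t, y t)) (Ici t) t)
    (hg : ContinuousOn g (Icc a b))
    (hg' : ∀ t ∈ Ico a b, HasDerivWithinAt g (v (g t, y t)) (Ici t) t)
    (ha : f a = g a) : EqOn f g (Icc a b) := by
  let C : Set (E × Y) := (fun t => (f t, y t)) '' Icc a b ∪ (fun t => (g t, y t)) '' Icc a b
  have hC : IsCompact C :=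
    (isCompact_Icc.image_of_continuousOn (hf.prodMk hy)).union
      (isCompact_Icc.image_of_continuousOn (hg.prodMk hy))
  obtain ⟨K, hK⟩ := hv.locallyLipschitzOn.exists_lipschitzOnWith_of_compact hC
  have hslice (t : ℝ) : LipschitzOnWith K (fun x => v (x, y t)) {x | (x, y t) ∈ C} :=
    (hK.comp (LipschitzWith.prodMk_right (y t)).lipschitzOnWith fun _ hx => hx).weaken
      (mul_one K).le
  exact ODE_solution_unique_of_mem_Icc_right (fun t _ => hslice t)
    hf hf' (fun t ht => .inl ⟨t, Ico_subset_Icc_self ht, rfl⟩)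
    hg hg' (fun t ht => .inr ⟨t, Ico_subset_Icc_self ht, rfl⟩) ha

lemma ODE_solution_le_of_locallyLipschitz {v : ℝ × Y → ℝ} {f g : ℝ → ℝ} (hab : a ≤ b)
    (hv : LocallyLipschitz v) (hy : ContinuousOn y (Icc a b))
    (hf : ContinuousOn f (Icc a b))
    (hf' : ∀ t ∈ Ico a b, HasDerivWithinAt f (v (f t, y t)) (Ici t) t)
    (hg : ContinuousOn g (Icc a b))
    (hg' : ∀ t ∈ Ico a b, HasDerivWithinAt g (v (g t, y t)) (Ici t) t)
    (ha : f a ≤ g a) : f b ≤ g b := by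
  by_contra! hb
  obtain ⟨c, ⟨hac, hcb⟩, hc⟩ : ∃ c ∈ Icc a b, f c = g c :=
    isPreconnected_Icc.intermediate_value₂ (left_mem_Icc.2 hab) (right_mem_Icc.2 hab)
      hf hg ha hb.le
  have hIcc : Icc c b ⊆ Icc a b := Icc_subset_Icc_left hac
  have hIco : Ico c b ⊆ Ico a b := Ico_subset_Ico_left hac
  have heq : EqOn f g (Icc c b) :=
    ODE_solution_eqOn_Icc_of_locallyLipschitz hv (hy.mono hIcc) (hf.mono hIcc)
      (fun t ht => hf' t (hIco ht)) (hg.mono hIcc) (fun t ht => hg' t (hIco ht)) hc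
  exact hb.ne' (heq (right_mem_Icc.2 hcb))

end ScalarComparison

lemma monotoneOn_sub_sup' {T ι G : Type*} [Preorder T] [AddCommGroup G] [LinearOrder G]
    [IsOrderedAddMonoid G] {s : Set T} {u : T → G} {f : T → ι → G} {J : Finset ι} (hJ : J.Nonempty)
    (h : ∀ j ∈ J, MonotoneOn (fun t => u t - f t j) s) :
    MonotoneOn (fun t => u t - J.sup' hJ (f t)) s := by
  intro a ha b hb hab
  obtain ⟨j, hj, hmax⟩ := J.exists_mem_eq_sup' hJ (f b)
  calc u a - J.sup' hJ (f a)
    _ ≤ u a - f a j := sub_le_sub_left (Finset.le_sup' (f a) hj) _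
    _ ≤ u b - f b j := h j hj ha hb hab
    _ = u b - J.sup' hJ (f b) := by rw [hmax]

lemma mul_min_sub_le_mul_min_sub {θ : ℝ → ℝ} {a b c : ℝ} (hθb : 0 ≤ θ b) (hθc : 0 ≤ θ c)
    (hba : b ≤ a) (hca : c ≤ a) :
    θ (min b c) * (b - c) ≤ θ (min a c) * (a - c) := by
  rw [min_eq_right hca]
  rcases le_total c b with hcb | hbc
  · rw [min_eq_right hcb]
    gcongr
  · rw [min_eq_left hbc]
    calc θ b * (b - c) ≤ 0 := mul_nonpos_of_nonneg_of_nonpos hθb (sub_nonpos.2 hbc)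
      _ ≤ θ c * (a - c) := mul_nonneg hθc (sub_nonneg.2 hca)

section Kuramoto

variable {ι : Type*} [Fintype ι]

/-- The rate of change in the first-order Kuramoto model of a coordinate with value `p.1`, when the
whole system is in the state `p.2`. The value of the coordinate is a separate argument so that all
coordinates of a solution obey the same scalar equation. -/
def kuramotoVelocity (κ : ℝ) (θ : ℝ → ℝ) (p : ℝ × (ι → ℝ)) : ℝ :=
  κ * ∑ k, θ (min p.1 (p.2 k)) * (p.1 - p.2 k)

/-- `ρ` solves the first-order Kuramoto model on the complete graph with vertex set `ι`, for times
`t ≥ 0`. No constraint on the range or the total mass of `ρ` is included. -/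
def IsKuramotoSolution (κ : ℝ) (θ : ℝ → ℝ) (ρ : ℝ → ι → ℝ) : Prop :=
  ∀ t ≥ 0, ∀ j, HasDerivAt (fun s => ρ s j) (kuramotoVelocity κ θ (ρ t j, ρ t)) t

variable {κ : ℝ} {θ : ℝ → ℝ}

lemma locallyLipschitz_kuramotoVelocity (κ : ℝ) (hθ : LocallyLipschitz θ) :
    LocallyLipschitz (kuramotoVelocity κ θ : ℝ × (ι → ℝ) → ℝ) := by
  have hfst : LocallyLipschitz (Prod.fst : ℝ × (ι → ℝ) → ℝ) :=
    LipschitzWith.prod_fst.locallyLipschitz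
  have hsnd (k : ι) : LocallyLipschitz fun p : ℝ × (ι → ℝ) => p.2 k :=
    ((LipschitzWith.eval k).comp LipschitzWith.prod_snd).locallyLipschitz
  exact locallyLipschitz_mul (LocallyLipschitz.const κ) <| locallyLipschitz_sum _ fun k _ =>
    locallyLipschitz_mul (hθ.comp (hfst.min (hsnd k))) (hfst.sub (hsnd k))

lemma kuramotoVelocity_le_of_forall_le (hκ : 0 ≤ κ) {y : ι → ℝ} (hθ : ∀ k, 0 ≤ θ (y k)) {i : ι}
    (hi : ∀ k, y k ≤ y i) (j : ι) :
    kuramotoVelocity κ θ (y j, y) ≤ kuramotoVelocity κ θ (y i, y) :=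
  mul_le_mul_of_nonneg_left
    (Finset.sum_le_sum fun k _ => mul_min_sub_le_mul_min_sub (hθ j) (hθ k) (hi j) (hi k)) hκ

namespace IsKuramotoSolution

variable {ρ : ℝ → ι → ℝ} {i j : ι}

lemma continuousOn (hρ : IsKuramotoSolution κ θ ρ) : ContinuousOn ρ (Ici 0) :=
  continuousOn_pi.2 fun j t ht => (hρ t ht j).continuousAt.continuousWithinAt

lemma apply_le_apply_of_initial_le (hρ : IsKuramotoSolution κ θ ρ) (hθ : LocallyLipschitz θ)
    (h₀ : ρ 0 j ≤ ρ 0 i) {t : ℝ} (ht : 0 ≤ t) : ρ t j ≤ ρ t i := by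
  have hcont : ContinuousOn ρ (Icc 0 t) := hρ.continuousOn.mono Icc_subset_Ici_self
  have hderiv (k : ι) : ∀ s ∈ Ico 0 t,
      HasDerivWithinAt (fun s => ρ s k) (kuramotoVelocity κ θ (ρ s k, ρ s)) (Ici s) s :=
    fun s hs => (hρ s hs.1 k).hasDerivWithinAt
  have hv : LocallyLipschitz (kuramotoVelocity κ θ : ℝ × (ι → ℝ) → ℝ) :=
    locallyLipschitz_kuramotoVelocity κ hθ
  exact ODE_solution_le_of_locallyLipschitz ht hv hcont (continuousOn_pi.1 hcont j) (hderiv j)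
    (continuousOn_pi.1 hcont i) (hderiv i) h₀

lemma apply_eq_apply_of_initial_eq (hρ : IsKuramotoSolution κ θ ρ) (hθ : LocallyLipschitz θ)
    (h₀ : ρ 0 j = ρ 0 i) {t : ℝ} (ht : 0 ≤ t) : ρ t j = ρ t i :=
  le_antisymm (hρ.apply_le_apply_of_initial_le hθ h₀.le ht)
    (hρ.apply_le_apply_of_initial_le hθ h₀.ge ht)

lemma monotoneOn_sub_apply (hρ : IsKuramotoSolution κ θ ρ) (hκ : 0 ≤ κ) (hθ : LocallyLipschitz θ)
    (hθρ : ∀ t ≥ 0, ∀ k, 0 ≤ θ (ρ t k)) (hi : ∀ k, ρ 0 k ≤ ρ 0 i) (j : ι) :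
    MonotoneOn (fun t => ρ t i - ρ t j) (Ici 0) := by
  have hderiv (t : ℝ) (ht : t ∈ Ici 0) := (hρ t ht i).sub (hρ t ht j)
  refine monotoneOn_of_hasDerivWithinAt_nonneg (convex_Ici 0) (HasDerivAt.continuousOn hderiv)
    (fun t ht => (hderiv t (interior_subset ht)).hasDerivWithinAt) fun t ht => ?_
  have ht₀ : 0 ≤ t := interior_subset ht
  exact sub_nonneg.2 <| kuramotoVelocity_le_of_forall_le hκ (hθρ t ht₀)
    (fun k => hρ.apply_le_apply_of_initial_le hθ (hi k) ht₀) j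

end IsKuramotoSolution

theorem kuramoto_complete_leading_block_general (hκ : 0 ≤ κ) (hθ : LocallyLipschitz θ)
    {ρ : ℝ → ι → ℝ} (hρ : IsKuramotoSolution κ θ ρ) (hθρ : ∀ t ≥ 0, ∀ k, 0 ≤ θ (ρ t k))
    {i : ι} (hi : ∀ k, ρ 0 k ≤ ρ 0 i) :
    (∀ t ≥ 0, ∀ j, ρ 0 j = ρ 0 i → ρ t j = ρ t i) ∧
    ∀ (J : Finset ι) (hJ : J.Nonempty),
      MonotoneOn (fun t => ρ t i - J.sup' hJ (ρ t)) (Ici 0) :=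
  ⟨fun _ ht _ hj => hρ.apply_eq_apply_of_initial_eq hθ hj ht,
    fun _ hJ => monotoneOn_sub_sup' hJ fun j _ => hρ.monotoneOn_sub_apply hκ hθ hθρ hi j⟩

end Kuramoto

/-- First-order Kuramoto model on the complete graph with `n` vertices:
if initially `ρ_1(0) = ⋯ = ρ_m(0) > ρ_{m+1}(0) ≥ ⋯ ≥ ρ_n(0)` (vertices are indexed by
`Fin n`, so "vertex 1" is the index with value `0`), then the first `m` coordinates stay
equal for all `t ≥ 0`, and the gap `ρ_1(t) - max_{m < j ≤ n} ρ_j(t)` is bounded below by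
its initial value. -/
theorem kuramoto_complete_leading_block
    (n : ℕ) (hn : 2 ≤ n) (κ : ℝ) (hκ : 0 < κ)
    (θm : ℝ → ℝ) (L : NNReal) (hθlip : LipschitzWith L θm) (hθmono : Monotone θm)
    (hθ0 : θm 0 = 0) (hθpos : ∀ x : ℝ, 0 < x → 0 < θm x)
    (ρ : ℝ → Fin n → ℝ)
    (hode : ∀ t ≥ (0 : ℝ), ∀ j : Fin n, HasDerivAt (fun s => ρ s j)
      (κ * ∑ k : Fin n, θm (min (ρ t j) (ρ t k)) * (ρ t j - ρ t k)) t)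
    (hrange : ∀ t ≥ (0 : ℝ), ∀ j : Fin n, ρ t j ∈ Set.Icc (0 : ℝ) 1)
    (hsum : ∀ t ≥ (0 : ℝ), ∑ j : Fin n, ρ t j = 1)
    (m : ℕ) (hm1 : 1 ≤ m) (hmn : m < n)
    (i0 : Fin n) (hi0 : (i0 : ℕ) = 0)
    (heq : ∀ j : Fin n, (j : ℕ) < m → ρ 0 j = ρ 0 i0)
    (hgt : ∀ j : Fin n, m ≤ (j : ℕ) → ρ 0 j < ρ 0 i0)
    (hsorted : ∀ j k : Fin n, m ≤ (j : ℕ) → j ≤ k → ρ 0 k ≤ ρ 0 j) :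
    (∀ t ≥ (0 : ℝ), ∀ j : Fin n, (j : ℕ) < m → ρ t j = ρ t i0) ∧
    (∀ t ≥ (0 : ℝ),
      ρ 0 i0 - maxFrom m hmn (ρ 0) ≤ ρ t i0 - maxFrom m hmn (ρ t)) := by
  have hi (k : Fin n) : ρ 0 k ≤ ρ 0 i0 :=
    (lt_or_ge (k : ℕ) m).elim (fun hk => (heq k hk).le) fun hk => (hgt k hk).le
  obtain ⟨hblock, hgap⟩ := kuramoto_complete_leading_block_general hκ.le hθlip.locallyLipschitz
    hode (fun t ht k => hθ0 ▸ hθmono (hrange t ht k).1) hi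
  exact ⟨fun t ht j hj => hblock t ht j (heq j hj), fun t ht => hgap _ _ self_mem_Ici ht ht⟩
end

section
/- For the first-order Kuramoto model on the complete graph with n vertices: let S_M = { j : ρ_j(0) = max_{1≤k≤n} ρ_k(0) } be the set of indices where the initial data attain their maximum, and let m = |S_M|. Then for every solution ρ, lim_{t→∞} ρ_j(t) = 1/m for every j ∈ S_M and lim_{t→∞} ρ_j(t) = 0 for every j ∉ S_M. -/
/-!
When `θ` is monotone and `ρ i ≥ ρ j`, the difference of the vector field at `i` and `j` is at most
a constant multiple of `ρ i - ρ j`. This one-sided estimate suffices for the flow to preserve the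
order of the states, so a vertex that starts maximal stays maximal. Its state increases, and so
does its gap to any other vertex. Both are bounded, so every state converges. If a vertex starting
below the maximum had a positive limit, the maximal state would have derivative bounded below by a
positive constant, contradicting boundedness. The states of the initially maximal vertices remain
equal, so they share the total mass `1` in the limit.
-/

open Filter Set Topology

section RealAnalysis

theorem exists_tendsto_atTop_of_monotoneOn_Ici {α β : Type*} [LinearOrder α]
    [ConditionallyCompleteLinearOrder β] [TopologicalSpace β] [OrderTopology β]
    {f : α → β} {a : α} (hf : MonotoneOn f (Ici a)) (hbdd : BddAbove (f '' Ici a)) :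
    ∃ l, Tendsto f atTop (𝓝 l) := by
  have hmono : Monotone fun t => f (max t a) := fun s t hst =>
    hf (le_max_right s a) (le_max_right t a) (max_le_max_right a hst)
  have hrange : BddAbove (range fun t => f (max t a)) :=
    hbdd.mono (range_subset_iff.2 fun t => mem_image_of_mem f (le_max_right t a))
  refine ⟨_, (tendsto_atTop_ciSup hmono hrange).congr' ?_⟩
  filter_upwards [eventually_ge_atTop a] with t ht
  rw [max_eq_left ht]

theorem tendsto_atTop_of_eventually_le_deriv {f f' : ℝ → ℝ} {c : ℝ} (hc : 0 < c)
    (hf : ∀ᶠ t in atTop, HasDerivAt f (f' t) t) (hf' : ∀ᶠ t in atTop, c ≤ f' t) :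
    Tendsto f atTop atTop := by
  obtain ⟨T, hT⟩ := eventually_atTop.1 (hf.and hf')
  have hgrowth : ∀ t ≥ T, c * (t - T) ≤ f t - f T := fun t ht =>
    (convex_Ici T).mul_sub_le_image_sub_of_le_deriv
      (fun s hs => (hT s hs).1.continuousAt.continuousWithinAt)
      (fun s hs => (hT s (interior_subset hs)).1.differentiableAt.differentiableWithinAt)
      (fun s hs => (hT s (interior_subset hs)).1.deriv ▸ (hT s (interior_subset hs)).2)
      T self_mem_Ici t ht ht
  have hlinear : Tendsto (fun t => c * (t - T) + f T) atTop atTop :=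
    tendsto_atTop_add_const_right _ _
      ((tendsto_atTop_add_const_right _ (-T) tendsto_id).const_mul_atTop hc)
  refine tendsto_atTop_mono' _ ?_ hlinear
  filter_upwards [eventually_ge_atTop T] with t ht
  exact le_sub_iff_add_le.1 (hgrowth t ht)

theorem nonpos_of_deriv_right_le_mul {d d' : ℝ → ℝ} {a b K : ℝ}
    (hd : ContinuousOn d (Icc a b)) (hd' : ∀ t ∈ Ico a b, HasDerivWithinAt d (d' t) (Ici t) t)
    (ha : d a ≤ 0) (hK : ∀ t ∈ Ico a b, 0 < d t → d' t ≤ K * d t) (hab : a ≤ b) :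
    d b ≤ 0 := by
  by_contra! hb
  -- An exponential barrier growing at rate `K + 1` that passes strictly below `d b` at time `b`.
  let B : ℝ → ℝ := fun t => d b / 2 * Real.exp ((K + 1) * (t - b))
  have hBpos : ∀ t, 0 < B t := fun t => mul_pos (half_pos hb) (Real.exp_pos _)
  have hBderiv : ∀ t, HasDerivAt B ((K + 1) * B t) t := fun t => by
    have hexp := ((((hasDerivAt_id t).sub_const b).const_mul (K + 1)).exp).const_mul (d b / 2)
    exact hexp.congr_deriv (by simp only [B, id]; ring)
  have hle : d b ≤ B b :=
    image_le_of_deriv_right_lt_deriv_boundary hd hd' (ha.trans (hBpos a).le) hBderiv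
      (fun t ht heq => by linarith [heq ▸ hK t ht (heq ▸ hBpos t), hBpos t])
      (right_mem_Icc.2 hab)
  have hBb : B b = d b / 2 := by simp [B]
  linarith

theorem tendsto_one_div_card_of_sum_eq_one {α ι : Type*} [Fintype ι] {l : Filter α}
    {x : α → ι → ℝ} {S : Finset ι} {j : ι} (hj : j ∈ S) (hsum : ∀ᶠ t in l, ∑ k, x t k = 1)
    (heq : ∀ᶠ t in l, ∀ k ∈ S, x t k = x t j)
    (hzero : ∀ k ∉ S, Tendsto (fun t => x t k) l (𝓝 0)) :
    Tendsto (fun t => x t j) l (𝓝 (1 / (S.card : ℝ))) := by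
  classical
  have hcard : (S.card : ℝ) ≠ 0 := Nat.cast_ne_zero.2 (Finset.card_ne_zero_of_mem hj)
  have hcompl : Tendsto (fun t => ∑ k ∈ Sᶜ, x t k) l (𝓝 0) := by
    simpa only [Finset.sum_const_zero] using
      tendsto_finsetSum Sᶜ fun k hk => hzero k (Finset.mem_compl.1 hk)
  have hlim : Tendsto (fun t => (1 - ∑ k ∈ Sᶜ, x t k) / S.card) l (𝓝 (1 / (S.card : ℝ))) := by
    simpa only [sub_zero] using (hcompl.const_sub 1).div_const (S.card : ℝ)
  refine hlim.congr' ?_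
  filter_upwards [hsum, heq] with t hsum heq
  have hS : ∑ k ∈ S, x t k = S.card * x t j := by
    rw [Finset.sum_eq_card_nsmul heq, nsmul_eq_mul]
  rw [div_eq_iff hcard, ← hsum, ← Finset.sum_add_sum_compl S, hS]
  ring

end RealAnalysis

/-- The interaction `θ (min x y) * (x - y)` felt by a vertex in state `x` from a vertex in
state `y`; it is antisymmetric in `x` and `y`. -/
def kuramotoCoupling (θ : ℝ → ℝ) (x y : ℝ) : ℝ :=
  θ (min x y) * (x - y)

/-- The `j`-th component of the vector field of the first-order Kuramoto model on the complete
graph with vertex set `ι`. The self-interaction `k = j` is included and vanishes. -/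
def kuramotoField {ι : Type*} [Fintype ι] (κ : ℝ) (θ : ℝ → ℝ) (x : ι → ℝ) (j : ι) : ℝ :=
  κ * ∑ k, kuramotoCoupling θ (x j) (x k)

/-- A solution on `[0, ∞)` of the first-order Kuramoto model on the complete graph with vertex
set `ι`, taking values in the probability simplex. The derivative is one-sided at `0`. -/
structure IsKuramotoSolution_s5 {ι : Type*} [Fintype ι] (κ : ℝ) (θ : ℝ → ℝ) (ρ : ℝ → ι → ℝ) :
    Prop where
  hasDerivWithinAt : ∀ t ≥ 0, ∀ j,
    HasDerivWithinAt (fun s => ρ s j) (kuramotoField κ θ (ρ t) j) (Ici 0) t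
  mem_stdSimplex : ∀ t ≥ 0, ρ t ∈ stdSimplex ℝ ι

section Coupling

variable {θ : ℝ → ℝ} {x y z : ℝ}

theorem kuramotoCoupling_of_le (hyx : y ≤ x) : kuramotoCoupling θ x y = θ y * (x - y) := by
  rw [kuramotoCoupling, min_eq_right hyx]

theorem kuramotoCoupling_of_ge (hxy : x ≤ y) : kuramotoCoupling θ x y = θ x * (x - y) := by
  rw [kuramotoCoupling, min_eq_left hxy]

theorem kuramotoCoupling_nonneg (hy : 0 ≤ θ y) (hyx : y ≤ x) : 0 ≤ kuramotoCoupling θ x y := by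
  rw [kuramotoCoupling_of_le hyx]
  exact mul_nonneg hy (sub_nonneg.2 hyx)

theorem kuramotoCoupling_sub_le (hθ : Monotone θ) (hyx : y ≤ x) (z : ℝ) :
    kuramotoCoupling θ x z - kuramotoCoupling θ y z ≤ θ x * (x - y) := by
  rcases le_total z y with hzy | hyz
  · have hzx := hzy.trans hyx
    rw [kuramotoCoupling_of_le hzx, kuramotoCoupling_of_le hzy]
    linarith [mul_le_mul_of_nonneg_right (hθ hzx) (sub_nonneg.2 hyx)]
  rw [kuramotoCoupling_of_ge hyz]
  rcases le_total z x with hzx | hxz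
  · rw [kuramotoCoupling_of_le hzx]
    linarith [mul_le_mul_of_nonneg_right (hθ hzx) (sub_nonneg.2 hzx),
      mul_le_mul_of_nonneg_right (hθ hyx) (sub_nonneg.2 hyz)]
  · rw [kuramotoCoupling_of_ge hxz]
    linarith [mul_le_mul_of_nonneg_right (hθ hyx) (sub_nonneg.2 hyz)]

theorem kuramotoCoupling_le_of_le_of_le (hy : 0 ≤ θ y) (hz : 0 ≤ θ z) (hyx : y ≤ x)
    (hzx : z ≤ x) : kuramotoCoupling θ y z ≤ kuramotoCoupling θ x z := by
  rcases le_total z y with hzy | hyz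
  · rw [kuramotoCoupling_of_le hzy, kuramotoCoupling_of_le hzx]
    gcongr
  · calc kuramotoCoupling θ y z = θ y * (y - z) := kuramotoCoupling_of_ge hyz
      _ ≤ 0 := mul_nonpos_of_nonneg_of_nonpos hy (sub_nonpos.2 hyz)
      _ ≤ kuramotoCoupling θ x z := kuramotoCoupling_nonneg hz hzx

end Coupling

section Field

variable {ι : Type*} [Fintype ι] {κ : ℝ} {θ : ℝ → ℝ} {x : ι → ℝ} {i j : ι}

theorem kuramotoField_sub_le (hκ : 0 ≤ κ) (hθ : Monotone θ) (hij : x i ≤ x j) :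
    kuramotoField κ θ x j - kuramotoField κ θ x i
      ≤ κ * (Fintype.card ι * θ (x j)) * (x j - x i) := by
  have hsum : ∑ k, (kuramotoCoupling θ (x j) (x k) - kuramotoCoupling θ (x i) (x k))
      ≤ Fintype.card ι * (θ (x j) * (x j - x i)) := by
    rw [← nsmul_eq_mul]
    exact Finset.sum_le_card_nsmul _ _ _ fun k _ => kuramotoCoupling_sub_le hθ hij (x k)
  calc kuramotoField κ θ x j - kuramotoField κ θ x i
      = κ * ∑ k, (kuramotoCoupling θ (x j) (x k) - kuramotoCoupling θ (x i) (x k)) := by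
        rw [Finset.sum_sub_distrib, mul_sub, kuramotoField, kuramotoField]
    _ ≤ κ * (Fintype.card ι * (θ (x j) * (x j - x i))) := by gcongr
    _ = κ * (Fintype.card ι * θ (x j)) * (x j - x i) := by ring

theorem mul_kuramotoCoupling_le_kuramotoField (hκ : 0 ≤ κ) (hθ : ∀ k, 0 ≤ θ (x k))
    (hmax : ∀ k, x k ≤ x i) (j : ι) :
    κ * kuramotoCoupling θ (x i) (x j) ≤ kuramotoField κ θ x i :=
  mul_le_mul_of_nonneg_left
    (Finset.single_le_sum (fun k _ => kuramotoCoupling_nonneg (hθ k) (hmax k))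
      (Finset.mem_univ j)) hκ

theorem kuramotoField_nonneg_of_forall_le (hκ : 0 ≤ κ) (hθ : ∀ k, 0 ≤ θ (x k))
    (hmax : ∀ k, x k ≤ x i) : 0 ≤ kuramotoField κ θ x i :=
  mul_nonneg hκ (Finset.sum_nonneg fun k _ => kuramotoCoupling_nonneg (hθ k) (hmax k))

theorem kuramotoField_le_of_forall_le (hκ : 0 ≤ κ) (hθ : ∀ k, 0 ≤ θ (x k))
    (hmax : ∀ k, x k ≤ x i) (j : ι) : kuramotoField κ θ x j ≤ kuramotoField κ θ x i :=
  mul_le_mul_of_nonneg_left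
    (Finset.sum_le_sum fun k _ =>
      kuramotoCoupling_le_of_le_of_le (hθ j) (hθ k) (hmax j) (hmax k)) hκ

end Field

namespace IsKuramotoSolution_s5

variable {ι : Type*} [Fintype ι] {κ : ℝ} {θ : ℝ → ℝ} {ρ : ℝ → ι → ℝ} {i j : ι}

theorem mem_Icc (hρ : IsKuramotoSolution_s5 κ θ ρ) {t : ℝ} (ht : 0 ≤ t) (j : ι) :
    ρ t j ∈ Icc (0 : ℝ) 1 :=
  mem_Icc_of_mem_stdSimplex (hρ.mem_stdSimplex t ht) j

theorem continuousOn_s5 (hρ : IsKuramotoSolution_s5 κ θ ρ) (j : ι) :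
    ContinuousOn (fun t => ρ t j) (Ici 0) :=
  fun t ht => (hρ.hasDerivWithinAt t ht j).continuousWithinAt

theorem le_of_initial_le (hρ : IsKuramotoSolution_s5 κ θ ρ) (hκ : 0 ≤ κ) (hθ : Monotone θ)
    (hij : ρ 0 i ≤ ρ 0 j) {t : ℝ} (ht : 0 ≤ t) : ρ t i ≤ ρ t j := by
  refine sub_nonpos.1 (nonpos_of_deriv_right_le_mul (d := fun s => ρ s i - ρ s j)
    (d' := fun s => kuramotoField κ θ (ρ s) i - kuramotoField κ θ (ρ s) j)
    (K := κ * (Fintype.card ι * θ 1)) ?_ ?_ (sub_nonpos.2 hij) ?_ ht)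
  · exact ((hρ.continuousOn_s5 i).sub (hρ.continuousOn_s5 j)).mono Icc_subset_Ici_self
  · exact fun s hs => ((hρ.hasDerivWithinAt s hs.1 i).sub (hρ.hasDerivWithinAt s hs.1 j)).mono
      (Ici_subset_Ici.2 hs.1)
  · intro s hs hpos
    have hθ1 : θ (ρ s i) ≤ θ 1 := hθ (hρ.mem_Icc hs.1 i).2
    calc kuramotoField κ θ (ρ s) i - kuramotoField κ θ (ρ s) j
        ≤ κ * (Fintype.card ι * θ (ρ s i)) * (ρ s i - ρ s j) :=
          kuramotoField_sub_le hκ hθ (sub_pos.1 hpos).le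
      _ ≤ κ * (Fintype.card ι * θ 1) * (ρ s i - ρ s j) := by gcongr

theorem theta_nonneg (hρ : IsKuramotoSolution_s5 κ θ ρ) (hθ : Monotone θ) (hθ0 : 0 ≤ θ 0)
    {t : ℝ} (ht : 0 ≤ t) (k : ι) : 0 ≤ θ (ρ t k) :=
  hθ0.trans (hθ (hρ.mem_Icc ht k).1)

theorem monotoneOn_of_initial_max (hρ : IsKuramotoSolution_s5 κ θ ρ) (hκ : 0 ≤ κ)
    (hθ : Monotone θ) (hθ0 : 0 ≤ θ 0) (hmax : ∀ k, ρ 0 k ≤ ρ 0 i) :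
    MonotoneOn (fun t => ρ t i) (Ici 0) := by
  refine monotoneOn_of_hasDerivWithinAt_nonneg (convex_Ici 0) (hρ.continuousOn_s5 i)
    (fun t ht => (hρ.hasDerivWithinAt t (interior_subset ht) i).mono interior_subset)
    fun t ht => ?_
  have ht0 : 0 ≤ t := interior_subset ht
  exact kuramotoField_nonneg_of_forall_le hκ (hρ.theta_nonneg hθ hθ0 ht0)
    fun k => hρ.le_of_initial_le hκ hθ (hmax k) ht0

theorem monotoneOn_sub_of_initial_max (hρ : IsKuramotoSolution_s5 κ θ ρ) (hκ : 0 ≤ κ)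
    (hθ : Monotone θ) (hθ0 : 0 ≤ θ 0) (hmax : ∀ k, ρ 0 k ≤ ρ 0 i) (j : ι) :
    MonotoneOn (fun t => ρ t i - ρ t j) (Ici 0) := by
  refine monotoneOn_of_hasDerivWithinAt_nonneg (convex_Ici 0)
    ((hρ.continuousOn_s5 i).sub (hρ.continuousOn_s5 j))
    (fun t ht => ((hρ.hasDerivWithinAt t (interior_subset ht) i).sub
      (hρ.hasDerivWithinAt t (interior_subset ht) j)).mono interior_subset)
    fun t ht => sub_nonneg.2 ?_
  have ht0 : 0 ≤ t := interior_subset ht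
  exact kuramotoField_le_of_forall_le hκ (hρ.theta_nonneg hθ hθ0 ht0)
    (fun k => hρ.le_of_initial_le hκ hθ (hmax k) ht0) j

theorem exists_tendsto (hρ : IsKuramotoSolution_s5 κ θ ρ) (hκ : 0 ≤ κ) (hθ : Monotone θ)
    (hθ0 : 0 ≤ θ 0) (j : ι) : ∃ r, 0 ≤ r ∧ Tendsto (fun t => ρ t j) atTop (𝓝 r) := by
  have : Nonempty ι := ⟨j⟩
  obtain ⟨i, hmax⟩ := Finite.exists_max (ρ 0)
  obtain ⟨M, hM⟩ := exists_tendsto_atTop_of_monotoneOn_Ici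
    (hρ.monotoneOn_of_initial_max hκ hθ hθ0 hmax)
    ⟨1, forall_mem_image.2 fun t ht => (hρ.mem_Icc ht i).2⟩
  obtain ⟨D, hD⟩ := exists_tendsto_atTop_of_monotoneOn_Ici
    (hρ.monotoneOn_sub_of_initial_max hκ hθ hθ0 hmax j)
    ⟨1, forall_mem_image.2 fun t ht => by linarith [(hρ.mem_Icc ht i).2, (hρ.mem_Icc ht j).1]⟩
  have hj : Tendsto (fun t => ρ t j) atTop (𝓝 (M - D)) := by
    simpa only [sub_sub_cancel] using hM.sub hD
  refine ⟨M - D, ge_of_tendsto hj ?_, hj⟩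
  filter_upwards [eventually_ge_atTop 0] with t ht using (hρ.mem_Icc ht j).1

theorem mul_initial_gap_le_kuramotoField (hρ : IsKuramotoSolution_s5 κ θ ρ) (hκ : 0 ≤ κ)
    (hθ : Monotone θ) (hθ0 : 0 ≤ θ 0) (hmax : ∀ k, ρ 0 k ≤ ρ 0 i) {r t : ℝ} (ht : 0 ≤ t)
    (hr : r ≤ ρ t j) : κ * (θ r * (ρ 0 i - ρ 0 j)) ≤ kuramotoField κ θ (ρ t) i := by
  have hmax_t : ∀ k, ρ t k ≤ ρ t i := fun k => hρ.le_of_initial_le hκ hθ (hmax k) ht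
  have hgap : ρ 0 i - ρ 0 j ≤ ρ t i - ρ t j :=
    hρ.monotoneOn_sub_of_initial_max hκ hθ hθ0 hmax j self_mem_Ici ht ht
  have hθ_nonneg := hρ.theta_nonneg hθ hθ0 ht
  calc κ * (θ r * (ρ 0 i - ρ 0 j))
      ≤ κ * (θ (ρ t j) * (ρ t i - ρ t j)) :=
        mul_le_mul_of_nonneg_left
          (mul_le_mul (hθ hr) hgap (sub_nonneg.2 (hmax j)) (hθ_nonneg j)) hκ
    _ = κ * kuramotoCoupling θ (ρ t i) (ρ t j) := by rw [kuramotoCoupling_of_le (hmax_t j)]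
    _ ≤ kuramotoField κ θ (ρ t) i := mul_kuramotoCoupling_le_kuramotoField hκ hθ_nonneg hmax_t j

theorem tendsto_zero_of_initial_lt (hρ : IsKuramotoSolution_s5 κ θ ρ) (hκ : 0 < κ)
    (hθ : Monotone θ) (hθ0 : 0 ≤ θ 0) (hθpos : ∀ x, 0 < x → 0 < θ x)
    (hmax : ∀ k, ρ 0 k ≤ ρ 0 i) (hlt : ρ 0 j < ρ 0 i) :
    Tendsto (fun t => ρ t j) atTop (𝓝 0) := by
  obtain ⟨r, hr0, hr⟩ := hρ.exists_tendsto hκ.le hθ hθ0 j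
  rcases hr0.eq_or_lt with rfl | hrpos
  · exact hr
  have hderiv : ∀ᶠ t in atTop,
      HasDerivAt (fun s => ρ s i) (kuramotoField κ θ (ρ t) i) t := by
    filter_upwards [eventually_gt_atTop 0] with t ht
    exact (hρ.hasDerivWithinAt t ht.le i).hasDerivAt (Ici_mem_nhds ht)
  have hspeed : ∀ᶠ t in atTop,
      κ * (θ (r / 2) * (ρ 0 i - ρ 0 j)) ≤ kuramotoField κ θ (ρ t) i := by
    filter_upwards [eventually_ge_atTop 0, hr.eventually_const_le (half_lt_self hrpos)]
      with t ht hrt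
    exact hρ.mul_initial_gap_le_kuramotoField hκ.le hθ hθ0 hmax ht hrt
  have hunbounded : Tendsto (fun t => ρ t i) atTop atTop :=
    tendsto_atTop_of_eventually_le_deriv
      (mul_pos hκ (mul_pos (hθpos _ (half_pos hrpos)) (sub_pos.2 hlt))) hderiv hspeed
  obtain ⟨t, ht, hgt⟩ := ((eventually_ge_atTop 0).and (hunbounded.eventually_gt_atTop 1)).exists
  exact absurd (hρ.mem_Icc ht i).2 hgt.not_ge

end IsKuramotoSolution_s5

theorem kuramoto_complete_asymptotic_state_general {ι : Type*} [Fintype ι] {κ : ℝ} (hκ : 0 < κ)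
    {θ : ℝ → ℝ} (hθ : Monotone θ) (hθ0 : 0 ≤ θ 0) (hθpos : ∀ x, 0 < x → 0 < θ x)
    {ρ : ℝ → ι → ℝ} (hρ : IsKuramotoSolution_s5 κ θ ρ)
    {S : Finset ι} (hS : ∀ j, j ∈ S ↔ ∀ k, ρ 0 k ≤ ρ 0 j) :
    (∀ j ∈ S, Tendsto (fun t => ρ t j) atTop (𝓝 (1 / (S.card : ℝ)))) ∧
    (∀ j ∉ S, Tendsto (fun t => ρ t j) atTop (𝓝 0)) := by
  have hzero : ∀ j ∉ S, Tendsto (fun t => ρ t j) atTop (𝓝 0) := fun j hj => by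
    have : Nonempty ι := ⟨j⟩
    obtain ⟨i, hmax⟩ := Finite.exists_max (ρ 0)
    have hlt : ρ 0 j < ρ 0 i := not_le.1 fun h => hj ((hS j).2 fun k => (hmax k).trans h)
    exact hρ.tendsto_zero_of_initial_lt hκ hθ hθ0 hθpos hmax hlt
  refine ⟨fun j hj => tendsto_one_div_card_of_sum_eq_one hj ?_ ?_ hzero, hzero⟩
  · filter_upwards [eventually_ge_atTop 0] with t ht using (hρ.mem_stdSimplex t ht).2
  · filter_upwards [eventually_ge_atTop 0] with t ht k hk
    exact le_antisymm (hρ.le_of_initial_le hκ.le hθ ((hS j).1 hj k) ht)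
      (hρ.le_of_initial_le hκ.le hθ ((hS k).1 hk j) ht)

/-- First-order Kuramoto model on the complete graph with `n` vertices:
let `S` be the set of indices at which the initial data attain their maximum and
`m = |S|`.  Then `ρ_j(t) → 1/m` for `j ∈ S` and `ρ_j(t) → 0` for `j ∉ S` as `t → ∞`. -/
theorem kuramoto_complete_asymptotic_state
    (n : ℕ) (hn : 2 ≤ n) (κ : ℝ) (hκ : 0 < κ)
    (θm : ℝ → ℝ) (L : NNReal) (hθlip : LipschitzWith L θm) (hθmono : Monotone θm)
    (hθ0 : θm 0 = 0) (hθpos : ∀ x : ℝ, 0 < x → 0 < θm x)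
    (ρ : ℝ → Fin n → ℝ)
    (hode : ∀ t ≥ (0 : ℝ), ∀ j : Fin n, HasDerivAt (fun s => ρ s j)
      (κ * ∑ k : Fin n, θm (min (ρ t j) (ρ t k)) * (ρ t j - ρ t k)) t)
    (hrange : ∀ t ≥ (0 : ℝ), ∀ j : Fin n, ρ t j ∈ Set.Icc (0 : ℝ) 1)
    (hsum : ∀ t ≥ (0 : ℝ), ∑ j : Fin n, ρ t j = 1)
    (S : Finset (Fin n)) (hS : ∀ j : Fin n, j ∈ S ↔ ∀ k : Fin n, ρ 0 k ≤ ρ 0 j) :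
    (∀ j ∈ S, Filter.Tendsto (fun t => ρ t j) Filter.atTop (nhds (1 / (S.card : ℝ)))) ∧
    (∀ j ∉ S, Filter.Tendsto (fun t => ρ t j) Filter.atTop (nhds 0)) :=
  kuramoto_complete_asymptotic_state_general hκ hθmono hθ0.ge hθpos
    ⟨fun t ht j => (hode t ht j).hasDerivWithinAt,
      fun t ht => ⟨fun j => (hrange t ht j).1, hsum t ht⟩⟩ hS
end

section
/- Hopf–Cole transform on a finite graph: let (ρ, S) : [0,∞) → ℝ^n × ℝ^n be a differentiable solution of the discrete Wasserstein Hamiltonian system, and define ξ_j(t) = (1/2)(∂_jF(ρ(t)) + S_j(t)) and ξ*_j(t) = (1/2)(∂_jF(ρ(t)) − S_j(t)). Then for all t ≥ 0 and all j: dξ_j/dt = Σ_{k,l=1}^n ∂²_{jk}F(ρ) · ω_{kl} · θ_{kl} · (ξ_k − ξ_l) + Σ_{l=1}^n ω_{jl} · (ξ*_l − ξ*_j)(ξ_l − ξ_j) · (∂₁θ)(ρ_j, ρ_l), and dξ*_j/dt = −Σ_{k,l=1}^n ∂²_{jk}F(ρ) · ω_{kl} · θ_{kl} · (ξ*_k −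 ξ*_l) − Σ_{l=1}^n ω_{jl} · (ξ*_l − ξ*_j)(ξ_l − ξ_j) · (∂₁θ)(ρ_j, ρ_l). -/
/-- Partial derivative `∂F/∂ρ_j` of a function `F : ℝⁿ → ℝ`, as the Fréchet derivative
applied to the `j`-th coordinate direction. -/
noncomputable def partialD {n : ℕ} (F : (Fin n → ℝ) → ℝ) (j : Fin n)
    (ρ : Fin n → ℝ) : ℝ :=
  fderiv ℝ F ρ (Pi.single j 1)

/-- Partial derivative of `θ : ℝ² → ℝ` in its first argument. -/
noncomputable def d1 (θ : ℝ → ℝ → ℝ) (a b : ℝ) : ℝ :=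
  deriv (fun x => θ x b) a

/-!
Fix a state `ρ` and let `L` be the graph Laplacian with edge weights `ω_{kl} θ(ρ_k, ρ_l)` and `Γ`
the carré du champ with edge weights `ω_{kl} ∂₁θ(ρ_k, ρ_l)`. Summation by parts and the symmetry of
`D²F` give the `j`-th partial derivative of the energy as `(D²F · L∇F)_j + ½ Γ_j(∇F, ∇F)`, so along
a solution

* `d/dt ∇F(ρ) = D²F · L S`,
* `d/dt S = D²F · L∇F + ½ (Γ(∇F, ∇F) - Γ(S, S))`.

Since `∇F = ξ + ξ*` and `S = ξ - ξ*`, polarization turns the last bracket into `4 Γ(ξ, ξ*)`; half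
the sum and half the difference of the two equations are the transformed dynamics.
-/

section WeightedGraph

variable {ι R : Type*} [Fintype ι] [CommRing R]

/-- The Laplacian `(L f)_k = ∑_l a_{kl} (f_k - f_l)` of a graph with edge weights `a`, with the sign
that makes it positive semidefinite when `a` is symmetric and nonnegative. -/
def weightedLaplacian (a : ι → ι → R) (f : ι → R) (k : ι) : R :=
  ∑ l, a k l * (f k - f l)

/-- The carré du champ `Γ_k(f, g) = ∑_l a_{kl} (f_k - f_l) (g_k - g_l)` of a graph with edge
weights `a`, without the customary factor `1 / 2`. -/
def carreDuChamp (a : ι → ι → R) (f g : ι → R) (k : ι) : R :=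
  ∑ l, a k l * (f k - f l) * (g k - g l)

lemma weightedLaplacian_add (a : ι → ι → R) (f g : ι → R) :
    weightedLaplacian a (f + g) = weightedLaplacian a f + weightedLaplacian a g := by
  ext k
  simp only [weightedLaplacian, Pi.add_apply, ← Finset.sum_add_distrib]
  exact Finset.sum_congr rfl fun l _ => by ring

lemma weightedLaplacian_sub (a : ι → ι → R) (f g : ι → R) :
    weightedLaplacian a (f - g) = weightedLaplacian a f - weightedLaplacian a g := by
  ext k
  simp only [weightedLaplacian, Pi.sub_apply, ← Finset.sum_sub_distrib]
  exact Finset.sum_congr rfl fun l _ => by ring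

lemma carreDuChamp_add_self_sub_sub_self (a : ι → ι → R) (f g : ι → R) (k : ι) :
    carreDuChamp a (f + g) (f + g) k - carreDuChamp a (f - g) (f - g) k
      = 4 * carreDuChamp a f g k := by
  simp only [carreDuChamp, Pi.add_apply, Pi.sub_apply, Finset.mul_sum, ← Finset.sum_sub_distrib]
  exact Finset.sum_congr rfl fun l _ => by ring

lemma sum_carreDuChamp {a : ι → ι → R} (ha : ∀ k l, a k l = a l k) (f g : ι → R) :
    ∑ k, carreDuChamp a f g k = 2 * ∑ k, g k * weightedLaplacian a f k := by
  have swap : ∑ k, ∑ l, g l * (a k l * (f k - f l)) = -∑ k, ∑ l, g k * (a k l * (f k - f l)) := by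
    rw [Finset.sum_comm]
    simp only [← Finset.sum_neg_distrib]
    exact Finset.sum_congr rfl fun k _ => Finset.sum_congr rfl fun l _ => by rw [ha l k]; ring
  calc ∑ k, carreDuChamp a f g k
      = ∑ k, ∑ l, g k * (a k l * (f k - f l)) - ∑ k, ∑ l, g l * (a k l * (f k - f l)) := by
        simp only [carreDuChamp, ← Finset.sum_sub_distrib]
        exact Finset.sum_congr rfl fun k _ => Finset.sum_congr rfl fun l _ => by ring
    _ = 2 * ∑ k, g k * weightedLaplacian a f k := by
        simp only [swap, sub_neg_eq_add, ← two_mul, weightedLaplacian, Finset.mul_sum]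

end WeightedGraph

section PartialDerivatives

variable {n : ℕ} {F : (Fin n → ℝ) → ℝ} {x : Fin n → ℝ}

lemma fderiv_apply_eq_sum_partialD (F : (Fin n → ℝ) → ℝ) (x v : Fin n → ℝ) :
    fderiv ℝ F x v = ∑ k, partialD F k x * v k := by
  conv_lhs => rw [pi_eq_sum_univ' v]
  simp only [map_sum, map_smul, partialD, smul_eq_mul, mul_comm]

lemma hasDerivAt_comp_of_differentiableAt {c : ℝ → Fin n → ℝ} {v : Fin n → ℝ} {t : ℝ}
    (hF : DifferentiableAt ℝ F (c t)) (hc : ∀ k, HasDerivAt (fun s => c s k) (v k) t) :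
    HasDerivAt (fun s => F (c s)) (∑ k, partialD F k (c t) * v k) t := by
  rw [← fderiv_apply_eq_sum_partialD]
  exact hF.hasFDerivAt.comp_hasDerivAt t (hasDerivAt_pi.2 hc)

lemma differentiableAt_partialD (hF : DifferentiableAt ℝ (fderiv ℝ F) x) (j : Fin n) :
    DifferentiableAt ℝ (partialD F j) x :=
  hF.clm_apply (differentiableAt_const _)

lemma partialD_partialD (hF : DifferentiableAt ℝ (fderiv ℝ F) x) (j k : Fin n) :
    partialD (partialD F j) k x = fderiv ℝ (fderiv ℝ F) x (Pi.single k 1) (Pi.single j 1) := by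
  change fderiv ℝ (fun y => fderiv ℝ F y (Pi.single j 1)) x (Pi.single k 1) = _
  simp [fderiv_clm_apply hF (differentiableAt_const _)]

lemma partialD_partialD_comm (hF : ∀ᶠ y in nhds x, DifferentiableAt ℝ F y)
    (hF' : DifferentiableAt ℝ (fderiv ℝ F) x) (j k : Fin n) :
    partialD (partialD F j) k x = partialD (partialD F k) j x := by
  rw [partialD_partialD hF', partialD_partialD hF']
  exact second_derivative_symmetric_of_eventually (hF.mono fun _ hy => hy.hasFDerivAt)
    hF'.hasFDerivAt _ _

end PartialDerivatives

section SymmetricFunction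

variable {E : Type*} [NormedAddCommGroup E] [NormedSpace ℝ E] {θ : ℝ → ℝ → ℝ} {x : E}

lemma hasFDerivAt_of_symm (hθsym : ∀ a b, θ a b = θ b a) {a b : ℝ}
    (hθ : DifferentiableAt ℝ (fun p : ℝ × ℝ => θ p.1 p.2) (a, b)) :
    HasFDerivAt (fun p : ℝ × ℝ => θ p.1 p.2)
      (d1 θ a b • ContinuousLinearMap.fst ℝ ℝ ℝ + d1 θ b a • ContinuousLinearMap.snd ℝ ℝ ℝ)
      (a, b) := by
  set θ' := fderiv ℝ (fun p : ℝ × ℝ => θ p.1 p.2) (a, b)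
  have hθ' : HasFDerivAt (fun p : ℝ × ℝ => θ p.1 p.2) θ' (a, b) := hθ.hasFDerivAt
  have hfst : HasDerivAt (fun s => θ s b) (θ' (1, 0)) a :=
    hθ'.comp_hasDerivAt (f := fun s => (s, b)) a ((hasDerivAt_id a).prodMk (hasDerivAt_const a b))
  have hsnd : HasDerivAt (fun s => θ s a) (θ' (0, 1)) b := by
    simp only [hθsym _ a]
    exact hθ'.comp_hasDerivAt (f := fun s => (a, s)) b
      ((hasDerivAt_const b a).prodMk (hasDerivAt_id b))
  refine hθ'.congr_fderiv ?_
  ext <;> simp [d1, hfst.deriv, hsnd.deriv]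

lemma hasFDerivAt_comp_prodMk_of_symm (hθsym : ∀ a b, θ a b = θ b a) {f g : E → ℝ}
    {f' g' : E →L[ℝ] ℝ} (hθ : DifferentiableAt ℝ (fun p : ℝ × ℝ => θ p.1 p.2) (f x, g x))
    (hf : HasFDerivAt f f' x) (hg : HasFDerivAt g g' x) :
    HasFDerivAt (fun y => θ (f y) (g y)) (d1 θ (f x) (g x) • f' + d1 θ (g x) (f x) • g') x :=
  (hasFDerivAt_of_symm hθsym hθ).comp (f := fun y => (f y, g y)) x (hf.prodMk hg)

end SymmetricFunction

section Energy

variable {n : ℕ} {ω : Fin n → Fin n → ℝ} {θ : ℝ → ℝ → ℝ} {x : Fin n → ℝ}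

/-- The edge weights `ω_{kl} θ(ρ_k, ρ_l)` at the state `ρ`. With `d1 θ` in place of `θ` these are
the weights `ω_{kl} ∂₁θ(ρ_k, ρ_l)`, which are not symmetric in `k` and `l`. -/
def stateWeight (ω : Fin n → Fin n → ℝ) (θ : ℝ → ℝ → ℝ) (ρ : Fin n → ℝ) (k l : Fin n) : ℝ :=
  ω k l * θ (ρ k) (ρ l)

/-- The energy `¼ ∑_{k,l} ω_{kl} (p_k - p_l)² θ(ρ_k, ρ_l)` of a state-dependent potential `p`, as a
function of the state `ρ`. For `p = ∇F` it is the discrete Fisher information. -/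
noncomputable def graphEnergy (ω : Fin n → Fin n → ℝ) (θ : ℝ → ℝ → ℝ)
    (p : Fin n → (Fin n → ℝ) → ℝ) (ρ : Fin n → ℝ) : ℝ :=
  (1 / 4) * ∑ k, ∑ l, ω k l * (p k ρ - p l ρ) ^ 2 * θ (ρ k) (ρ l)

lemma stateWeight_comm (hω : ∀ k l, ω k l = ω l k) (hθsym : ∀ a b, θ a b = θ b a) (k l : Fin n) :
    stateWeight ω θ x k l = stateWeight ω θ x l k := by
  rw [stateWeight, stateWeight, hω, hθsym]

lemma hasFDerivAt_edge_energy (hθsym : ∀ a b, θ a b = θ b a) {k l : Fin n}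
    (hθ : DifferentiableAt ℝ (fun p : ℝ × ℝ => θ p.1 p.2) (x k, x l)) {f g : (Fin n → ℝ) → ℝ}
    {f' g' : (Fin n → ℝ) →L[ℝ] ℝ} (hf : HasFDerivAt f f' x) (hg : HasFDerivAt g g' x) (c : ℝ) :
    HasFDerivAt (fun σ => c * (f σ - g σ) ^ 2 * θ (σ k) (σ l))
      ((2 * (c * θ (x k) (x l) * (f x - g x))) • (f' - g')
        + (c * (f x - g x) ^ 2) • (d1 θ (x k) (x l) • ContinuousLinearMap.proj k
          + d1 θ (x l) (x k) • ContinuousLinearMap.proj l)) x := by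
  have hmobility := hasFDerivAt_comp_prodMk_of_symm hθsym hθ
    (hasFDerivAt_apply k x) (hasFDerivAt_apply l x)
  refine ((((hf.sub hg).pow 2).const_mul c).mul hmobility).congr_fderiv ?_
  ext v
  simp only [Pi.sub_apply, smul_add, Nat.add_one_sub_one, pow_one, nsmul_eq_mul, Nat.cast_ofNat,
    add_apply, smul_apply, ContinuousLinearMap.proj_apply, smul_eq_mul, sub_apply]
  ring

lemma partialD_graphEnergy_eq_sum_edges (hθsym : ∀ a b, θ a b = θ b a)
    (hθ : ∀ k l, DifferentiableAt ℝ (fun p : ℝ × ℝ => θ p.1 p.2) (x k, x l))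
    {p : Fin n → (Fin n → ℝ) → ℝ} (hp : ∀ k, DifferentiableAt ℝ (p k) x) (j : Fin n) :
    partialD (graphEnergy ω θ p) j x
      = 1 / 4 * ∑ k, ∑ l,
          (2 * (ω k l * θ (x k) (x l) * (p k x - p l x)) * (partialD (p k) j x - partialD (p l) j x)
            + ω k l * (p k x - p l x) ^ 2 * (d1 θ (x k) (x l) * (Pi.single j 1 : Fin n → ℝ) k
              + d1 θ (x l) (x k) * (Pi.single j 1 : Fin n → ℝ) l)) := by
  have henergy : HasFDerivAt (graphEnergy ω θ p) _ x :=
    (HasFDerivAt.fun_sum fun k _ => HasFDerivAt.fun_sum fun l _ => hasFDerivAt_edge_energy hθsym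
      (hθ k l) (hp k).hasFDerivAt (hp l).hasFDerivAt (ω k l)).const_mul (1 / 4)
  rw [partialD, henergy.fderiv]
  simp [partialD, mul_add]

lemma partialD_graphEnergy (hω : ∀ k l, ω k l = ω l k) (hθsym : ∀ a b, θ a b = θ b a)
    (hθ : ∀ k l, DifferentiableAt ℝ (fun p : ℝ × ℝ => θ p.1 p.2) (x k, x l))
    {p : Fin n → (Fin n → ℝ) → ℝ} (hp : ∀ k, DifferentiableAt ℝ (p k) x) (j : Fin n) :
    partialD (graphEnergy ω θ p) j x
      = ∑ k, partialD (p k) j x * weightedLaplacian (stateWeight ω θ x) (fun l => p l x) k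
        + 1 / 2 * carreDuChamp (stateWeight ω (d1 θ) x) (fun l => p l x) (fun l => p l x) j := by
  set P : Fin n → ℝ := fun k => p k x
  set Q : Fin n → ℝ := fun k => partialD (p k) j x
  set e : Fin n → ℝ := Pi.single j 1
  set b := stateWeight ω (d1 θ) x
  have hΓ_fst : ∑ k, ∑ l, b k l * (P k - P l) * (P k - P l) * e k = carreDuChamp b P P j := by
    simp only [← Finset.sum_mul]
    simp [carreDuChamp, e, Pi.single_apply]
  have hΓ_snd : ∑ k, ∑ l, b l k * (P l - P k) * (P l - P k) * e l = carreDuChamp b P P j := by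
    rw [Finset.sum_comm, hΓ_fst]
  calc partialD (graphEnergy ω θ p) j x
      = 1 / 4 * ∑ k, ∑ l, (2 * (stateWeight ω θ x k l * (P k - P l) * (Q k - Q l))
          + b k l * (P k - P l) * (P k - P l) * e k
          + b l k * (P l - P k) * (P l - P k) * e l) := by
        rw [partialD_graphEnergy_eq_sum_edges hθsym hθ hp]
        congr! 3 with k _ l
        simp only [b, stateWeight, hω l k, P, Q, e]
        ring
    _ = 1 / 4 * (2 * ∑ k, carreDuChamp (stateWeight ω θ x) P Q k
          + carreDuChamp b P P j + carreDuChamp b P P j) := by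
        simp only [Finset.sum_add_distrib, ← Finset.mul_sum, hΓ_fst, hΓ_snd]
        rfl
    _ = ∑ k, Q k * weightedLaplacian (stateWeight ω θ x) P k
          + 1 / 2 * carreDuChamp b P P j := by
        rw [sum_carreDuChamp (stateWeight_comm hω hθsym)]
        ring

end Energy

section HopfCole

variable {n : ℕ} {ω : Fin n → Fin n → ℝ} {F : (Fin n → ℝ) → ℝ} {θ : ℝ → ℝ → ℝ}
  {ρ S : ℝ → Fin n → ℝ} {t : ℝ}

/-- The vector `D²F(ρ) · L_ρ f`, where `L_ρ` is the Laplacian with weights `ω_{kl} θ(ρ_k, ρ_l)`. -/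
noncomputable def hessianLaplacian (ω : Fin n → Fin n → ℝ) (F : (Fin n → ℝ) → ℝ) (θ : ℝ → ℝ → ℝ)
    (ρ f : Fin n → ℝ) (j : Fin n) : ℝ :=
  ∑ k, ∑ l, partialD (partialD F j) k ρ * ω k l * θ (ρ k) (ρ l) * (f k - f l)

lemma hessianLaplacian_eq_sum (x f : Fin n → ℝ) (j : Fin n) :
    hessianLaplacian ω F θ x f j
      = ∑ k, partialD (partialD F j) k x * weightedLaplacian (stateWeight ω θ x) f k := by
  simp only [hessianLaplacian, weightedLaplacian, stateWeight, Finset.mul_sum, mul_assoc]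

lemma hessianLaplacian_add (x f g : Fin n → ℝ) :
    hessianLaplacian ω F θ x (f + g)
      = hessianLaplacian ω F θ x f + hessianLaplacian ω F θ x g := by
  ext j
  simp only [hessianLaplacian_eq_sum, weightedLaplacian_add, Pi.add_apply, mul_add,
    Finset.sum_add_distrib]

lemma hessianLaplacian_sub (x f g : Fin n → ℝ) :
    hessianLaplacian ω F θ x (f - g)
      = hessianLaplacian ω F θ x f - hessianLaplacian ω F θ x g := by
  ext j
  simp only [hessianLaplacian_eq_sum, weightedLaplacian_sub, Pi.sub_apply, mul_sub,
    Finset.sum_sub_distrib]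

lemma hasDerivAt_partialD_of_continuity_equation (hF : DifferentiableAt ℝ (fderiv ℝ F) (ρ t))
    (hρ : ∀ j, HasDerivAt (fun s => ρ s j)
      (∑ l, ω j l * (S t j - S t l) * θ (ρ t j) (ρ t l)) t) (j : Fin n) :
    HasDerivAt (fun s => partialD F j (ρ s)) (hessianLaplacian ω F θ (ρ t) (S t) j) t := by
  refine (hasDerivAt_comp_of_differentiableAt (differentiableAt_partialD hF j) hρ).congr_deriv ?_
  simp only [hessianLaplacian, Finset.mul_sum]
  exact Finset.sum_congr rfl fun k _ => Finset.sum_congr rfl fun l _ => by ring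

lemma partialD_graphEnergy_partialD (hω : ∀ k l, ω k l = ω l k)
    (hθsym : ∀ a b, θ a b = θ b a) {x : Fin n → ℝ} (hF : ∀ᶠ y in nhds x, DifferentiableAt ℝ F y)
    (hF' : DifferentiableAt ℝ (fderiv ℝ F) x)
    (hθ : ∀ k l, DifferentiableAt ℝ (fun p : ℝ × ℝ => θ p.1 p.2) (x k, x l)) (j : Fin n) :
    partialD (graphEnergy ω θ (partialD F)) j x
      = hessianLaplacian ω F θ x (fun k => partialD F k x) j
        + 1 / 2 * carreDuChamp (stateWeight ω (d1 θ) x) (fun k => partialD F k x)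
          (fun k => partialD F k x) j := by
  rw [partialD_graphEnergy hω hθsym hθ (differentiableAt_partialD hF'), hessianLaplacian_eq_sum]
  simp only [partialD_partialD_comm hF hF' _ j]

/-- The form that applies to the entropy `F = ∑ ρ_j log ρ_j` and to the logarithmic mean `θ`, which
are smooth only for positive arguments. -/
theorem hopf_cole_transform_on_graph_general
    (hω : ∀ j l, ω j l = ω l j) (hθsym : ∀ a b, θ a b = θ b a)
    (hF : ∀ᶠ σ in nhds (ρ t), DifferentiableAt ℝ F σ)
    (hF' : DifferentiableAt ℝ (fderiv ℝ F) (ρ t))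
    (hθ : ∀ k l, DifferentiableAt ℝ (fun p : ℝ × ℝ => θ p.1 p.2) (ρ t k, ρ t l))
    (hρ : ∀ j, HasDerivAt (fun s => ρ s j)
      (∑ l, ω j l * (S t j - S t l) * θ (ρ t j) (ρ t l)) t)
    (hS : ∀ j, HasDerivAt (fun s => S s j)
      (-(1 / 2) * ∑ l, ω j l * (S t j - S t l) ^ 2 * d1 θ (ρ t j) (ρ t l)
        + partialD (fun σ => (1 / 4) * ∑ k, ∑ l,
            ω k l * (partialD F k σ - partialD F l σ) ^ 2 * θ (σ k) (σ l)) j (ρ t)) t)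
    {ξ ξs : ℝ → Fin n → ℝ}
    (hξ : ∀ s j, ξ s j = (partialD F j (ρ s) + S s j) / 2)
    (hξs : ∀ s j, ξs s j = (partialD F j (ρ s) - S s j) / 2) (j : Fin n) :
    HasDerivAt (fun s => ξ s j)
      ((∑ k, ∑ l,
          partialD (partialD F j) k (ρ t) * ω k l * θ (ρ t k) (ρ t l) * (ξ t k - ξ t l))
        + ∑ l, ω j l * (ξs t l - ξs t j) * (ξ t l - ξ t j) * d1 θ (ρ t j) (ρ t l)) t ∧
    HasDerivAt (fun s => ξs s j)
      (-(∑ k, ∑ l,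
          partialD (partialD F j) k (ρ t) * ω k l * θ (ρ t k) (ρ t l) * (ξs t k - ξs t l))
        - ∑ l, ω j l * (ξs t l - ξs t j) * (ξ t l - ξ t j) * d1 θ (ρ t j) (ρ t l)) t := by
  have hgrad : (fun k => partialD F k (ρ t)) = ξ t + ξs t := by
    ext k; simp only [Pi.add_apply, hξ, hξs]; ring
  have hmomentum : S t = ξ t - ξs t := by
    ext k; simp only [Pi.sub_apply, hξ, hξs]; ring
  set Γ := carreDuChamp (stateWeight ω (d1 θ) (ρ t))
  have hΓ_self : ∑ l, ω j l * (S t j - S t l) ^ 2 * d1 θ (ρ t j) (ρ t l) = Γ (S t) (S t) j :=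
    Finset.sum_congr rfl fun l _ => by rw [stateWeight]; ring
  have hΓ_cross : ∑ l, ω j l * (ξs t l - ξs t j) * (ξ t l - ξ t j) * d1 θ (ρ t j) (ρ t l)
      = Γ (ξ t) (ξs t) j :=
    Finset.sum_congr rfl fun l _ => by rw [stateWeight]; ring
  have hpolar := carreDuChamp_add_self_sub_sub_self (stateWeight ω (d1 θ) (ρ t)) (ξ t) (ξs t) j
  have hgrad' := hasDerivAt_partialD_of_continuity_equation hF' hρ j
  rw [hmomentum, hessianLaplacian_sub, Pi.sub_apply] at hgrad'
  have hS' : HasDerivAt _ (_ + partialD (graphEnergy ω θ (partialD F)) j (ρ t)) t := hS j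
  rw [partialD_graphEnergy_partialD hω hθsym hF hF' hθ, hΓ_self, hgrad, hmomentum,
    hessianLaplacian_add, Pi.add_apply] at hS'
  rw [hΓ_cross, funext (hξ · j), funext (hξs · j)]
  change HasDerivAt _ (hessianLaplacian ω F θ (ρ t) (ξ t) j + _) t ∧
    HasDerivAt _ (-hessianLaplacian ω F θ (ρ t) (ξs t) j - _) t
  exact ⟨((hgrad'.add hS').div_const 2).congr_deriv (by linear_combination hpolar / 4),
    ((hgrad'.sub hS').div_const 2).congr_deriv (by linear_combination -hpolar / 4)⟩

end HopfCole

/-- **Hopf–Cole transform on a finite graph.**  For a solution `(ρ, S)`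
of the discrete Wasserstein Hamiltonian system with potential `F`, weights `ω` and
probability weight `θ`, the transformed variables `ξ_j = (∂_jF(ρ) + S_j)/2`,
`ξ*_j = (∂_jF(ρ) - S_j)/2` satisfy the transformed Hopf–Cole dynamics. -/
theorem hopf_cole_transform_on_graph
    (n : ℕ) (hn : 2 ≤ n)
    (ω : Fin n → Fin n → ℝ)
    (hωsym : ∀ j l : Fin n, ω j l = ω l j)
    (hωdiag : ∀ j : Fin n, ω j j = 0)
    (F : (Fin n → ℝ) → ℝ) (hF : ContDiff ℝ 2 F)
    (θ : ℝ → ℝ → ℝ) (hθ : ContDiff ℝ 1 (fun p : ℝ × ℝ => θ p.1 p.2))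
    (hθsym : ∀ a b : ℝ, θ a b = θ b a)
    (ρ S : ℝ → Fin n → ℝ)
    (hρ : ∀ t ≥ (0 : ℝ), ∀ j : Fin n, HasDerivAt (fun s => ρ s j)
      (∑ l : Fin n, ω j l * (S t j - S t l) * θ (ρ t j) (ρ t l)) t)
    (hS : ∀ t ≥ (0 : ℝ), ∀ j : Fin n, HasDerivAt (fun s => S s j)
      (-(1 / 2) * ∑ l : Fin n, ω j l * (S t j - S t l) ^ 2 * d1 θ (ρ t j) (ρ t l)
        + partialD (fun σ => (1 / 4) * ∑ k : Fin n, ∑ l : Fin n,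
            ω k l * (partialD F k σ - partialD F l σ) ^ 2 * θ (σ k) (σ l)) j (ρ t)) t)
    (ξ ξs : ℝ → Fin n → ℝ)
    (hξ : ∀ t : ℝ, ∀ j : Fin n, ξ t j = (partialD F j (ρ t) + S t j) / 2)
    (hξs : ∀ t : ℝ, ∀ j : Fin n, ξs t j = (partialD F j (ρ t) - S t j) / 2) :
    ∀ t ≥ (0 : ℝ), ∀ j : Fin n,
      HasDerivAt (fun s => ξ s j)
        ((∑ k : Fin n, ∑ l : Fin n,
            partialD (partialD F j) k (ρ t) * ω k l * θ (ρ t k) (ρ t l) * (ξ t k - ξ t l))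
          + ∑ l : Fin n,
              ω j l * (ξs t l - ξs t j) * (ξ t l - ξ t j) * d1 θ (ρ t j) (ρ t l)) t ∧
      HasDerivAt (fun s => ξs s j)
        (-(∑ k : Fin n, ∑ l : Fin n,
            partialD (partialD F j) k (ρ t) * ω k l * θ (ρ t k) (ρ t l) * (ξs t k - ξs t l))
          - ∑ l : Fin n,
              ω j l * (ξs t l - ξs t j) * (ξ t l - ξ t j) * d1 θ (ρ t j) (ρ t l)) t :=
  fun t ht => hopf_cole_transform_on_graph_general hωsym hθsym
    (.of_forall (hF.differentiable two_ne_zero))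
    ((hF.fderiv_right (m := 1) le_rfl).differentiable one_ne_zero _)
    (fun _ _ => hθ.differentiable one_ne_zero _) (hρ t ht) (hS t ht) hξ hξs
end
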